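/- For any p, q ∈ P_n there exists a coupling M ∈ C(p,q) such that H(M) ≤ H(p ∧ q) + 1; consequently, H(M) ≤ min_{N ∈ C(p,q)} H(N) + 1, i.e., the minimum-entropy coupling of p and q can be approximated within an additive gap of 1 bit. -/

import Mathlib

/-!
Write `Pₘ`, `Qₘ` for the sums of the `m` smallest components of `p` and `q`, and `z = p ∧ q`. The
sum of the `m` smallest components of `z` is `max Pₘ Qₘ`.

*The coupling.* Process the indices from the smallest component to the largest, keeping a partial
matrix together with a vector `w` of leftovers. When `Qₘ ≤ Pₘ`, all columns seen so far are filled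
exactly, while row `k` still has mass `w k` with no column assigned. The next column first absorbs
leftovers, each of them entirely or not at all, and the new diagonal cell receives what is missing.
This is possible because a leftover of row `k` is at most `p k`, hence at most the new component of
`p`. If the mass available does not fill the new column, the roles of rows and columns are
exchanged. In both cases leftovers move unsplit into fresh cells, and the only new pieces are a
diagonal entry and a leftover, whose sum is the new component of `z`; cutting a mass `x` into two
pieces increases the entropy by at most `x` bits. The components of `z` sum to `1`, so the total
loss is at most one bit (`PartialCoupling.step`, `exists_partialCoupling`).

*Optimality up to one bit.* If `N` is any coupling, then `i` entries of `N` lie in at most `i` rows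
and at most `i` columns, so the sum of the `i` largest ones is at most the `i`-th prefix sum of `z`.
Gibbs' inequality and summation by parts then give `H(z) ≤ H(N)`
(`sum_negMulLog_le_of_prefix_le`, `glb_entropy_le`).
-/

open Finset

/-- Sum of the first `i` components (0-indexed) of a vector; for `i ≥ n` this is the total
sum, which implements zero padding. -/
noncomputable def prefSum {n : ℕ} (p : Fin n → ℝ) (i : ℕ) : ℝ :=
  ∑ k : Fin n, if (k : ℕ) < i then p k else 0

/-- Membership in `P_n`: sorted non-increasingly, nonnegative components, summing to 1. -/
def IsProbVec {n : ℕ} (p : Fin n → ℝ) : Prop :=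
  (∀ i j : Fin n, i ≤ j → p j ≤ p i) ∧ (∀ i, 0 ≤ p i) ∧ (∑ i, p i) = 1

/-- Majorization `p ≼ q` (the shorter vector being padded with zeros). -/
def Maj {n m : ℕ} (p : Fin n → ℝ) (q : Fin m → ℝ) : Prop :=
  ∀ i : ℕ, prefSum p i ≤ prefSum q i
/-- The greatest lower bound `p ∧ q` in the majorization lattice `(P_n, ≼)`:
`z₁ = min (p₁, q₁)` and `zᵢ = min (∑_{j≤i} pⱼ, ∑_{j≤i} qⱼ) − ∑_{j<i} zⱼ`, i.e. its prefix
sums are the minima of the corresponding prefix sums of `p` and `q`. -/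
noncomputable def glbVec {n : ℕ} (p q : Fin n → ℝ) : Fin n → ℝ :=
  fun i => min (prefSum p ((i : ℕ) + 1)) (prefSum q ((i : ℕ) + 1)) -
    min (prefSum p (i : ℕ)) (prefSum q (i : ℕ))
/-- Shannon entropy (base-2 logarithm, with the convention `0 · log (1/0) = 0`). -/
noncomputable def H2 {n : ℕ} (p : Fin n → ℝ) : ℝ :=
  ∑ i, -(p i * Real.logb 2 (p i))
/-- `M ∈ C(p,q)`: a coupling of `p` and `q`. -/
def IsCoupling {n m : ℕ} (M : Fin n → Fin m → ℝ) (p : Fin n → ℝ) (q : Fin m → ℝ) : Prop :=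
  (∀ i j, 0 ≤ M i j) ∧ (∀ i, (∑ j, M i j) = p i) ∧ (∀ j, (∑ i, M i j) = q j)

/-- Shannon entropy of the vector of entries of a matrix. -/
noncomputable def H2mat {n m : ℕ} (M : Fin n → Fin m → ℝ) : ℝ :=
  ∑ i, ∑ j, -(M i j * Real.logb 2 (M i j))

open Real (negMulLog)

/-! ### Elementary facts about the entropy function -/

lemma neg_mul_logb (x : ℝ) : -(x * Real.logb 2 x) = negMulLog x / Real.log 2 := by
  rw [Real.logb, Real.negMulLog]; ring

/-- Cutting a mass into two pieces increases the entropy by at most one bit per unit of mass. -/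
lemma negMulLog_add_le {a b : ℝ} (ha : 0 ≤ a) (hb : 0 ≤ b) :
    negMulLog a + negMulLog b ≤ negMulLog (a + b) + (a + b) * Real.log 2 := by
  have h := Real.concaveOn_negMulLog.2 (Set.mem_Ici.2 ha) (Set.mem_Ici.2 hb)
    (by norm_num : (0 : ℝ) ≤ 1 / 2) (by norm_num : (0 : ℝ) ≤ 1 / 2) (by norm_num)
  simp only [smul_eq_mul] at h
  rw [← mul_add, ← mul_add, Real.negMulLog_mul] at h
  have h2 : negMulLog (1 / 2 : ℝ) = 1 / 2 * Real.log 2 := by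
    rw [Real.negMulLog, one_div, Real.log_inv]; ring
  rw [h2] at h
  linarith

/-- Pointwise form of Gibbs' inequality. -/
lemma gibbs_pointwise {z v : ℝ} (hz : 0 ≤ z) (hv : 0 < v) :
    negMulLog z ≤ -(z * Real.log v) + (v - z) := by
  rcases hz.eq_or_lt with rfl | hz
  · simp [hv.le]
  · have h := Real.log_le_sub_one_of_pos (div_pos hv hz)
    rw [Real.log_div hv.ne' hz.ne'] at h
    have h2 := mul_le_mul_of_nonneg_left h hz.le
    have h3 : z * (v / z - 1) = v - z := by field_simp
    rw [h3] at h2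
    rw [Real.negMulLog]; linarith

/-! ### Construction of the coupling -/

/-- The components of `p ∧ q` listed from the smallest one, for sequences `p`, `q` listed from the
smallest component: the `m`-th partial sum is the larger of those of `p` and `q`. -/
noncomputable def revGlb (p q : ℕ → ℝ) (k : ℕ) : ℝ :=
  max (∑ i ∈ range (k + 1), p i) (∑ i ∈ range (k + 1), q i) -
    max (∑ i ∈ range k, p i) (∑ i ∈ range k, q i)

lemma revGlb_comm (p q : ℕ → ℝ) (k : ℕ) : revGlb p q k = revGlb q p k := by
  simp only [revGlb, max_comm]

/-- A matrix on the first `m` indices whose columns have sums `q`, and whose rows have sums `p`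
after adding the leftovers `w`; the entropy of all pieces together (in nats) exceeds that of the
first `m` terms of `revGlb p q` by at most one bit per unit of mass. -/
def PartialCoupling (p q : ℕ → ℝ) (m : ℕ) : Prop :=
  ∃ (M : ℕ → ℕ → ℝ) (w : ℕ → ℝ), (∀ i j, 0 ≤ M i j) ∧ (∀ i, 0 ≤ w i) ∧
    (∀ i < m, ∑ j ∈ range m, M i j + w i = p i) ∧
    (∀ j < m, ∑ i ∈ range m, M i j = q j) ∧
    ∑ i ∈ range m, ∑ j ∈ range m, negMulLog (M i j) + ∑ i ∈ range m, negMulLog (w i) ≤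
      ∑ k ∈ range m, (negMulLog (revGlb p q k) + revGlb p q k * Real.log 2)

/-- The `m × m` matrix `M` bordered by a last column `u` with corner `r` and a zero last row. -/
noncomputable def border (m : ℕ) (M : ℕ → ℕ → ℝ) (u : ℕ → ℝ) (r : ℝ) (i j : ℕ) : ℝ :=
  if j = m then (if i = m then r else u i) else if i = m then 0 else M i j

lemma border_nonneg {m : ℕ} {M : ℕ → ℕ → ℝ} {u : ℕ → ℝ} {r : ℝ} (hM : ∀ i j, 0 ≤ M i j)
    (hu : ∀ i, 0 ≤ u i) (hr : 0 ≤ r) (i j : ℕ) : 0 ≤ border m M u r i j := by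
  unfold border
  split_ifs
  exacts [hr, hu i, le_rfl, hM i j]

lemma sum_border_row (m : ℕ) (M : ℕ → ℕ → ℝ) (u : ℕ → ℝ) (r : ℝ) (F : ℝ → ℝ) {i : ℕ}
    (hi : i < m) :
    ∑ j ∈ range (m + 1), F (border m M u r i j) = ∑ j ∈ range m, F (M i j) + F (u i) := by
  rw [sum_range_succ]
  congr 1
  · refine sum_congr rfl fun j hj => ?_
    simp [border, hi.ne, (mem_range.1 hj).ne]
  · simp [border, hi.ne]

lemma sum_border_last_row (m : ℕ) (M : ℕ → ℕ → ℝ) (u : ℕ → ℝ) (r : ℝ) (F : ℝ → ℝ)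
    (hF : F 0 = 0) : ∑ j ∈ range (m + 1), F (border m M u r m j) = F r := by
  rw [sum_range_succ, sum_eq_zero, zero_add]
  · simp [border]
  · intro j hj
    simp [border, (mem_range.1 hj).ne, hF]

lemma sum_border_col (m : ℕ) (M : ℕ → ℕ → ℝ) (u : ℕ → ℝ) (r : ℝ) {j : ℕ} (hj : j < m) :
    ∑ i ∈ range (m + 1), border m M u r i j = ∑ i ∈ range m, M i j := by
  rw [sum_range_succ]
  have : border m M u r m j = 0 := by simp [border, hj.ne]
  rw [this, add_zero]
  refine sum_congr rfl fun i hi => ?_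
  simp [border, hj.ne, (mem_range.1 hi).ne]

lemma sum_border_last_col (m : ℕ) (M : ℕ → ℕ → ℝ) (u : ℕ → ℝ) (r : ℝ) :
    ∑ i ∈ range (m + 1), border m M u r i m = ∑ i ∈ range m, u i + r := by
  rw [sum_range_succ]
  congr 1
  · refine sum_congr rfl fun i hi => ?_
    simp [border, (mem_range.1 hi).ne]
  · simp [border]

lemma sum_negMulLog_border (m : ℕ) (M : ℕ → ℕ → ℝ) (u : ℕ → ℝ) (r : ℝ) :
    ∑ i ∈ range (m + 1), ∑ j ∈ range (m + 1), negMulLog (border m M u r i j) =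
      ∑ i ∈ range m, ∑ j ∈ range m, negMulLog (M i j) + ∑ i ∈ range m, negMulLog (u i) +
        negMulLog r := by
  rw [sum_range_succ, sum_border_last_row _ _ _ _ _ Real.negMulLog_zero, ← sum_add_distrib]
  congr 1
  exact sum_congr rfl fun i hi => sum_border_row m M u r _ (mem_range.1 hi)

/-- Greedy selection: adding leftovers until the next one would overshoot `x` leaves a gap of at
most `c`. -/
lemma exists_subset_sum_le (w : ℕ → ℝ) (c x : ℝ) (hx : 0 ≤ x) (T : Finset ℕ)
    (hw : ∀ k ∈ T, w k ≤ c) (hT : x ≤ ∑ k ∈ T, w k + c) :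
    ∃ S ⊆ T, ∑ k ∈ S, w k ≤ x ∧ x ≤ ∑ k ∈ S, w k + c := by
  induction T using Finset.induction_on with
  | empty => exact ⟨∅, subset_rfl, by simpa using hx, hT⟩
  | insert a T ha ih =>
    by_cases h : ∑ k ∈ insert a T, w k ≤ x
    · exact ⟨_, subset_rfl, h, hT⟩
    · have h1 := hw a (mem_insert_self _ _)
      rw [sum_insert ha] at h
      obtain ⟨S, hS, h2⟩ := ih (fun k hk => hw k (mem_insert_of_mem hk)) (by linarith)
      exact ⟨S, hS.trans (subset_insert _ _), h2⟩

lemma PartialCoupling.step {p q : ℕ → ℝ} {m : ℕ} (hp : 0 ≤ p m) (hq : 0 ≤ q m)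
    (hmono : ∀ k < m, p k ≤ p m) (hPQ : ∑ i ∈ range m, q i ≤ ∑ i ∈ range m, p i)
    (h : PartialCoupling p q m) :
    (∑ i ∈ range (m + 1), q i ≤ ∑ i ∈ range (m + 1), p i ∧ PartialCoupling p q (m + 1)) ∨
    (∑ i ∈ range (m + 1), p i ≤ ∑ i ∈ range (m + 1), q i ∧ PartialCoupling q p (m + 1)) := by
  obtain ⟨M, w, hM, hw, hrow, hcol, hent⟩ := h
  have hL : ∑ i ∈ range m, w i = ∑ i ∈ range m, p i - ∑ i ∈ range m, q i := by
    have h1 : ∑ i ∈ range m, (∑ j ∈ range m, M i j + w i) = ∑ i ∈ range m, p i :=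
      sum_congr rfl fun i hi => hrow i (mem_range.1 hi)
    have h2 : ∑ j ∈ range m, ∑ i ∈ range m, M i j = ∑ j ∈ range m, q j :=
      sum_congr rfl fun j hj => hcol j (mem_range.1 hj)
    rw [sum_add_distrib, sum_comm, h2] at h1
    linarith
  have hwp : ∀ k ∈ range m, w k ≤ p m := fun k hk => by
    have h1 := hrow k (mem_range.1 hk)
    have h2 : 0 ≤ ∑ j ∈ range m, M k j := sum_nonneg fun j _ => hM k j
    linarith [hmono k (mem_range.1 hk)]
  rcases le_total (∑ i ∈ range (m + 1), q i) (∑ i ∈ range (m + 1), p i) with hle | hle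
  · -- The leftovers in `S` move to column `m`, and the component `p m` is cut into the diagonal
    -- entry `r` and a new leftover of row `m`.
    refine Or.inl ⟨hle, ?_⟩
    have hz : revGlb p q m = p m := by
      rw [revGlb, max_eq_left hle, max_eq_left hPQ, sum_range_succ]; ring
    obtain ⟨S, hS, hS1, hS2⟩ := exists_subset_sum_le w (p m) (q m) hq (range m) hwp (by
      rw [sum_range_succ, sum_range_succ] at hle; linarith)
    set r := q m - ∑ k ∈ S, w k with hr
    have hsum : ∑ i ∈ range m, (if i ∈ S then w i else 0) = ∑ k ∈ S, w k := by
      rw [sum_ite_mem, inter_eq_right.2 hS]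
    refine ⟨border m M (fun i => if i ∈ S then w i else 0) r,
      fun i => if i = m then p m - r else if i ∈ S then 0 else w i, ?_, ?_, ?_, ?_, ?_⟩
    · refine border_nonneg hM (fun i => ?_) (by linarith)
      split_ifs
      exacts [hw i, le_rfl]
    · intro i
      dsimp only
      split_ifs
      exacts [by linarith, le_rfl, hw i]
    · intro i hi
      rcases (Nat.lt_succ_iff.1 hi).lt_or_eq with hi | rfl
      · rw [sum_border_row m M _ r (fun x => x) hi, ← hrow i hi]
        by_cases his : i ∈ S <;> simp [hi.ne, his]
      · rw [sum_border_last_row i M _ r (fun x => x) rfl]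
        simp
    · intro j hj
      rcases (Nat.lt_succ_iff.1 hj).lt_or_eq with hj | rfl
      · rw [sum_border_col m M _ r hj, hcol j hj]
      · rw [sum_border_last_col, hsum]; linarith
    · have h1 : ∑ i ∈ range m, negMulLog (if i ∈ S then w i else 0) +
          ∑ i ∈ range m, negMulLog (if i = m then p m - r else if i ∈ S then 0 else w i) =
          ∑ i ∈ range m, negMulLog (w i) := by
        rw [← sum_add_distrib]
        refine sum_congr rfl fun i hi => ?_
        by_cases his : i ∈ S <;> simp [(mem_range.1 hi).ne, his]
      have h2 := negMulLog_add_le (a := r) (b := p m - r) (by linarith) (by linarith)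
      rw [add_sub_cancel] at h2
      rw [sum_negMulLog_border, sum_range_succ (fun i => negMulLog (ite _ _ _)),
        sum_range_succ (fun k => negMulLog (revGlb p q k) + _), hz, if_pos rfl]
      linarith
  · -- All leftovers move to column `m` and row `m` is filled by its diagonal entry; what is missing
    -- in column `m` is the first leftover with rows and columns exchanged.
    refine Or.inr ⟨hle, ?_⟩
    set s := ∑ i ∈ range (m + 1), q i - ∑ i ∈ range (m + 1), p i with hs
    have hz : revGlb p q m = p m + s := by
      rw [revGlb, max_eq_right hle, max_eq_left hPQ, hs, sum_range_succ p]; ring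
    refine ⟨fun i j => border m M w (p m) j i, fun i => if i = m then s else 0,
      fun i j => border_nonneg hM hw hp j i, ?_, ?_, ?_, ?_⟩
    · intro i
      dsimp only
      split_ifs
      exacts [by linarith, le_rfl]
    · intro i hi
      rcases (Nat.lt_succ_iff.1 hi).lt_or_eq with hi | rfl
      · rw [sum_border_col m M _ _ hi, hcol i hi]; simp [hi.ne]
      · rw [sum_border_last_col, hL]; simp only [if_true]; rw [hs, sum_range_succ, sum_range_succ]
        ring
    · intro j hj
      rcases (Nat.lt_succ_iff.1 hj).lt_or_eq with hj | rfl
      · rw [sum_border_row m M _ _ (fun x => x) hj, hrow j hj]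
      · rw [sum_border_last_row j M _ _ (fun x => x) rfl]
    · have h1 : ∑ i ∈ range m, negMulLog (if i = m then s else 0) = 0 :=
        sum_eq_zero fun i hi => by simp [(mem_range.1 hi).ne]
      have h2 := negMulLog_add_le hp (by linarith : 0 ≤ s)
      rw [sum_comm, sum_negMulLog_border, sum_range_succ (fun i => negMulLog (ite _ _ _)), h1]
      simp only [revGlb_comm q p]
      rw [sum_range_succ (fun k => negMulLog (revGlb p q k) + _), hz, if_true]
      linarith

lemma exists_partialCoupling {p q : ℕ → ℝ} {n : ℕ} (hp : ∀ k < n, 0 ≤ p k)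
    (hq : ∀ k < n, 0 ≤ q k) (hpm : ∀ m < n, ∀ k < m, p k ≤ p m)
    (hqm : ∀ m < n, ∀ k < m, q k ≤ q m) (m : ℕ) (hm : m ≤ n) :
    (∑ i ∈ range m, q i ≤ ∑ i ∈ range m, p i ∧ PartialCoupling p q m) ∨
    (∑ i ∈ range m, p i ≤ ∑ i ∈ range m, q i ∧ PartialCoupling q p m) := by
  induction m with
  | zero => exact Or.inl ⟨by simp, fun _ _ => 0, fun _ => 0, by simp⟩
  | succ m ih =>
    rcases ih (by omega) with ⟨h1, h2⟩ | ⟨h1, h2⟩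
    · exact h2.step (hp m hm) (hq m hm) (hpm m hm) h1
    · exact (h2.step (hq m hm) (hp m hm) (hqm m hm) h1).symm

/-- When the totals agree no leftover survives, so the partial coupling is a coupling. -/
lemma PartialCoupling.complete {p q : ℕ → ℝ} {n : ℕ}
    (hsum : ∑ i ∈ range n, p i = ∑ i ∈ range n, q i) (h : PartialCoupling p q n) :
    ∃ M : ℕ → ℕ → ℝ, (∀ i j, 0 ≤ M i j) ∧ (∀ i < n, ∑ j ∈ range n, M i j = p i) ∧
      (∀ j < n, ∑ i ∈ range n, M i j = q j) ∧
      ∑ i ∈ range n, ∑ j ∈ range n, negMulLog (M i j) ≤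
        ∑ k ∈ range n, (negMulLog (revGlb p q k) + revGlb p q k * Real.log 2) := by
  obtain ⟨M, w, hM, hw, hrow, hcol, hent⟩ := h
  have hL : ∑ i ∈ range n, w i = 0 := by
    have h1 : ∑ i ∈ range n, (∑ j ∈ range n, M i j + w i) = ∑ i ∈ range n, p i :=
      sum_congr rfl fun i hi => hrow i (mem_range.1 hi)
    have h2 : ∑ j ∈ range n, ∑ i ∈ range n, M i j = ∑ j ∈ range n, q j :=
      sum_congr rfl fun j hj => hcol j (mem_range.1 hj)
    rw [sum_add_distrib, sum_comm, h2] at h1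
    linarith
  have hw0 : ∀ i ∈ range n, w i = 0 := (sum_eq_zero_iff_of_nonneg fun i _ => hw i).1 hL
  refine ⟨M, hM, fun i hi => ?_, hcol, ?_⟩
  · rw [← hrow i hi, hw0 i (mem_range.2 hi), add_zero]
  · rw [sum_eq_zero (s := range n) (f := fun i => negMulLog (w i))
      fun i hi => by simp [hw0 i hi]] at hent
    linarith

/-! ### Prefix sums -/

/-- Extension of a vector to `ℕ` by zero. -/
noncomputable def ext0 {n : ℕ} (p : Fin n → ℝ) (k : ℕ) : ℝ := if h : k < n then p ⟨k, h⟩ else 0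

lemma ext0_fin {n : ℕ} (p : Fin n → ℝ) (i : Fin n) : ext0 p i = p i := by simp [ext0]

lemma ext0_nonneg {n : ℕ} {p : Fin n → ℝ} (hp : ∀ i, 0 ≤ p i) (k : ℕ) : 0 ≤ ext0 p k := by
  unfold ext0
  split_ifs
  exacts [hp _, le_rfl]

lemma prefSum_zero {n : ℕ} (p : Fin n → ℝ) : prefSum p 0 = 0 := by simp [prefSum]

lemma prefSum_succ {n : ℕ} (p : Fin n → ℝ) (i : ℕ) :
    prefSum p (i + 1) = prefSum p i + ext0 p i := by
  have h : ext0 p i = ∑ k : Fin n, if (k : ℕ) = i then p k else 0 := by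
    unfold ext0
    split_ifs with h
    · rw [sum_eq_single (⟨i, h⟩ : Fin n)]
      · simp
      · intro b _ hb
        rw [if_neg fun hbi => hb (Fin.ext hbi)]
      · simp
    · exact (sum_eq_zero fun k _ => if_neg (by have := k.2; omega)).symm
  rw [h, prefSum, prefSum, ← sum_add_distrib]
  refine sum_congr rfl fun k _ => ?_
  rcases lt_trichotomy (k : ℕ) i with h | h | h
  · rw [if_pos (by omega), if_pos h, if_neg (by omega), add_zero]
  · rw [if_pos (by omega), if_neg (by omega), if_pos h, zero_add]
  · rw [if_neg (by omega), if_neg (by omega), if_neg (by omega), add_zero]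

lemma prefSum_of_le {n : ℕ} (p : Fin n → ℝ) {i : ℕ} (hi : n ≤ i) : prefSum p i = ∑ k, p k :=
  sum_congr rfl fun k _ => if_pos (by have := k.2; omega)

lemma prefSum_mono {n : ℕ} {p : Fin n → ℝ} (hp : ∀ i, 0 ≤ p i) : Monotone (prefSum p) :=
  monotone_nat_of_le_succ fun i => by
    rw [prefSum_succ]
    linarith [ext0_nonneg hp i]

/-- The partial sums of the components taken in increasing order are the complements of the prefix
sums. -/
lemma sum_range_rev {n : ℕ} {p : Fin n → ℝ} (hp : ∑ i, p i = 1) (m : ℕ) (hm : m ≤ n) :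
    ∑ k ∈ range m, ext0 p (n - 1 - k) = 1 - prefSum p (n - m) := by
  induction m with
  | zero => simp [prefSum_of_le p le_rfl, hp]
  | succ m ih =>
    have h : n - m = (n - (m + 1)) + 1 := by omega
    rw [sum_range_succ, ih (by omega), h, prefSum_succ]
    rw [show n - 1 - m = n - (m + 1) by omega]
    ring

lemma revGlb_eq {n : ℕ} {p q : Fin n → ℝ} (hp : ∑ i, p i = 1) (hq : ∑ i, q i = 1) {k : ℕ}
    (hk : k < n) :
    revGlb (fun i => ext0 p (n - 1 - i)) (fun i => ext0 q (n - 1 - i)) k =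
      min (prefSum p (n - 1 - k + 1)) (prefSum q (n - 1 - k + 1)) -
        min (prefSum p (n - 1 - k)) (prefSum q (n - 1 - k)) := by
  rw [revGlb, sum_range_rev hp _ hk, sum_range_rev hq _ hk, sum_range_rev hp _ hk.le,
    sum_range_rev hq _ hk.le, max_sub_sub_left, max_sub_sub_left,
    show n - (k + 1) = n - 1 - k by omega, show n - k = n - 1 - k + 1 by omega]
  ring

/-- The components of `p ∧ q`, indexed by `ℕ`. -/
noncomputable def glbSeq {n : ℕ} (p q : Fin n → ℝ) (k : ℕ) : ℝ :=
  min (prefSum p (k + 1)) (prefSum q (k + 1)) - min (prefSum p k) (prefSum q k)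

lemma sum_glbSeq {n : ℕ} (p q : Fin n → ℝ) (m : ℕ) :
    ∑ k ∈ range m, glbSeq p q k = min (prefSum p m) (prefSum q m) := by
  unfold glbSeq
  rw [sum_range_sub (fun k => min (prefSum p k) (prefSum q k)), prefSum_zero, prefSum_zero]
  simp

lemma H2_eq {n : ℕ} (p q : Fin n → ℝ) :
    H2 (glbVec p q) = (∑ k ∈ range n, negMulLog (glbSeq p q k)) / Real.log 2 := by
  rw [H2, sum_div, ← Fin.sum_univ_eq_sum_range (fun k => negMulLog (glbSeq p q k) / Real.log 2)]
  exact sum_congr rfl fun i _ => neg_mul_logb _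

lemma H2mat_eq {n : ℕ} (M : Fin n → Fin n → ℝ) :
    H2mat M = (∑ i, ∑ j, negMulLog (M i j)) / Real.log 2 := by
  simp only [H2mat, neg_mul_logb, sum_div]

lemma sum_fin_rev {n : ℕ} (f : ℕ → ℝ) : ∑ i : Fin n, f (n - 1 - i) = ∑ i ∈ range n, f i := by
  rw [Fin.sum_univ_eq_sum_range (fun i => f (n - 1 - i)), sum_range_reflect]

lemma exists_coupling_entropy_le {n : ℕ} (p q : Fin n → ℝ) (hp : IsProbVec p)
    (hq : IsProbVec q) :
    ∃ M : Fin n → Fin n → ℝ, IsCoupling M p q ∧ H2mat M ≤ H2 (glbVec p q) + 1 := by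
  obtain ⟨hpa, hp0, hp1⟩ := hp
  obtain ⟨hqa, hq0, hq1⟩ := hq
  set p' : ℕ → ℝ := fun i => ext0 p (n - 1 - i) with hp'
  set q' : ℕ → ℝ := fun i => ext0 q (n - 1 - i) with hq'
  have hmono : ∀ r : Fin n → ℝ, (∀ i j : Fin n, i ≤ j → r j ≤ r i) → ∀ m < n, ∀ k < m,
      ext0 r (n - 1 - k) ≤ ext0 r (n - 1 - m) := by
    intro r hr m hm k hk
    rw [ext0, ext0, dif_pos (by omega), dif_pos (by omega)]
    exact hr _ _ (by simp only [Fin.mk_le_mk]; omega)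
  have hsp : ∑ i ∈ range n, p' i = 1 := by
    rw [hp', sum_range_rev hp1 n le_rfl, Nat.sub_self, prefSum_zero, sub_zero]
  have hsq : ∑ i ∈ range n, q' i = 1 := by
    rw [hq', sum_range_rev hq1 n le_rfl, Nat.sub_self, prefSum_zero, sub_zero]
  obtain ⟨M, hM, hrow, hcol, hent⟩ : ∃ M : ℕ → ℕ → ℝ, (∀ i j, 0 ≤ M i j) ∧
      (∀ i < n, ∑ j ∈ range n, M i j = p' i) ∧ (∀ j < n, ∑ i ∈ range n, M i j = q' j) ∧
      ∑ i ∈ range n, ∑ j ∈ range n, negMulLog (M i j) ≤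
        ∑ k ∈ range n, (negMulLog (revGlb p' q' k) + revGlb p' q' k * Real.log 2) := by
    rcases exists_partialCoupling (p := p') (q := q') (n := n) (fun k _ => ext0_nonneg hp0 _)
      (fun k _ => ext0_nonneg hq0 _) (hmono p hpa) (hmono q hqa) n le_rfl with ⟨_, h⟩ | ⟨_, h⟩
    · exact h.complete (hsp.trans hsq.symm)
    · obtain ⟨M, hM, hrow, hcol, hent⟩ := h.complete (hsq.trans hsp.symm)
      refine ⟨fun i j => M j i, fun i j => hM j i, hcol, hrow, ?_⟩
      rw [sum_comm]
      simpa only [revGlb_comm p' q'] using hent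
  have hrev : ∀ i : Fin n, n - 1 - (n - 1 - (i : ℕ)) = i := fun i => by have := i.2; omega
  refine ⟨fun i j => M (n - 1 - i) (n - 1 - j), ⟨fun i j => hM _ _, fun i => ?_, fun j => ?_⟩, ?_⟩
  · rw [sum_fin_rev (fun j => M (n - 1 - i) j), hrow _ (by have := i.2; omega), hp']
    simp only [hrev, ext0_fin]
  · rw [sum_fin_rev (fun i => M i (n - 1 - j)), hcol _ (by have := j.2; omega), hq']
    simp only [hrev, ext0_fin]
  · have hlog : 0 < Real.log 2 := Real.log_pos one_lt_two
    have hz : ∀ k ∈ range n, revGlb p' q' k = glbSeq p q (n - 1 - k) := fun k hk =>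
      revGlb_eq hp1 hq1 (mem_range.1 hk)
    have h1 : ∑ k ∈ range n, (negMulLog (revGlb p' q' k) + revGlb p' q' k * Real.log 2) =
        ∑ k ∈ range n, negMulLog (glbSeq p q k) + Real.log 2 := by
      rw [sum_congr rfl fun k hk => by rw [hz k hk],
        sum_range_reflect (fun k => negMulLog (glbSeq p q k) + glbSeq p q k * Real.log 2),
        sum_add_distrib, ← sum_mul, sum_glbSeq, prefSum_of_le p le_rfl, prefSum_of_le q le_rfl,
        hp1, hq1, min_self, one_mul]
    have h2 : ∑ i : Fin n, ∑ j : Fin n, negMulLog (M (n - 1 - i) (n - 1 - j)) =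
        ∑ i ∈ range n, ∑ j ∈ range n, negMulLog (M i j) := by
      rw [← sum_fin_rev]
      exact sum_congr rfl fun i _ => sum_fin_rev (fun j => negMulLog (M (n - 1 - i) j))
    rw [H2mat_eq, H2_eq, h2, div_add_one hlog.ne']
    exact div_le_div_of_nonneg_right (hent.trans h1.le) hlog.le

/-! ### Entropy of an arbitrary coupling -/

/-- Summation by parts: if `c` is non-increasing and the partial sums of `d` are nonnegative, then
`∑ d c` is at least the last partial sum of `d` times the last value of `c`. -/
lemma abel_le (d c : ℕ → ℝ) (m : ℕ) (hd : ∀ i ≤ m + 1, 0 ≤ ∑ k ∈ range i, d k)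
    (hc : ∀ i < m, c (i + 1) ≤ c i) :
    (∑ k ∈ range (m + 1), d k) * c m ≤ ∑ k ∈ range (m + 1), d k * c k := by
  induction m with
  | zero => simp
  | succ m ih =>
    have h1 := ih (fun i hi => hd i (by omega)) (fun i hi => hc i (by omega))
    have h2 := mul_le_mul_of_nonneg_left (hc m (by omega)) (hd (m + 1) (by omega))
    rw [sum_range_succ, sum_range_succ (fun k => d k * c k)]
    linarith

/-- A sorted positive vector `v` whose prefix sums are dominated by those of `z`, with the same
total, has at least the entropy of `z`. -/
lemma sum_negMulLog_le_of_prefix_le (z v : ℕ → ℝ) (r : ℕ) (hz : ∀ k, 0 ≤ z k)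
    (hv : ∀ k < r, 0 < v k) (hanti : ∀ k, k + 1 < r → v (k + 1) ≤ v k)
    (hpre : ∀ i ≤ r, ∑ k ∈ range i, v k ≤ ∑ k ∈ range i, z k)
    (htot : ∑ k ∈ range r, v k = ∑ k ∈ range r, z k) :
    ∑ k ∈ range r, negMulLog (z k) ≤ ∑ k ∈ range r, negMulLog (v k) := by
  rcases r with _ | m
  · simp
  have hab := abel_le (fun k => z k - v k) (fun k => Real.log (v k)) m
    (fun i hi => by rw [sum_sub_distrib]; linarith [hpre i hi])
    (fun i hi => Real.log_le_log (hv _ (by omega)) (hanti i (by omega)))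
  rw [sum_sub_distrib, htot, sub_self, zero_mul] at hab
  have hg : ∑ k ∈ range (m + 1), negMulLog (z k) ≤
      ∑ k ∈ range (m + 1), (-(z k * Real.log (v k)) + (v k - z k)) :=
    sum_le_sum fun k hk => gibbs_pointwise (hz k) (hv k (mem_range.1 hk))
  have he : ∑ k ∈ range (m + 1), (-(z k * Real.log (v k)) + (v k - z k)) =
      ∑ k ∈ range (m + 1), negMulLog (v k) -
        ∑ k ∈ range (m + 1), (z k - v k) * Real.log (v k) +
        (∑ k ∈ range (m + 1), v k - ∑ k ∈ range (m + 1), z k) := by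
    rw [← sum_sub_distrib, ← sum_sub_distrib, ← sum_add_distrib]
    refine sum_congr rfl fun k _ => ?_
    rw [Real.negMulLog]; ring
  rw [he, htot] at hg
  linarith

/-- Prefix sums of a sorted vector bound all sums of as many components. -/
lemma sum_le_prefSum {n : ℕ} {p : Fin n → ℝ} (hp : IsProbVec p) (R : Finset (Fin n)) (i : ℕ)
    (hR : #R ≤ i) : ∑ k ∈ R, p k ≤ prefSum p i := by
  obtain ⟨hpa, hp0, hp1⟩ := hp
  rcases le_or_gt n i with hi | hi
  · rw [prefSum_of_le p hi]
    exact sum_le_univ_sum_of_nonneg hp0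
  · -- Compare both sums with the threshold `t`, the `i`-th component counted from zero.
    set t := p ⟨i, hi⟩ with ht
    have hB : #{k : Fin n | (k : ℕ) < i} = i := by
      rw [show ({k : Fin n | (k : ℕ) < i} : Finset (Fin n)) = Finset.Iio ⟨i, hi⟩ by
        ext k; simp [Fin.lt_def], Fin.card_Iio]
    have h1 : ∑ k ∈ R, (p k - t) ≤ ∑ k : Fin n, if (k : ℕ) < i then p k - t else 0 := by
      have hpos : ∀ k : Fin n, 0 ≤ if (k : ℕ) < i then p k - t else 0 := by
        intro k
        split_ifs with h
        · exact sub_nonneg.2 (hpa _ _ (Fin.le_def.2 h.le))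
        · exact le_rfl
      refine le_trans (sum_le_sum fun k _ => ?_) (sum_le_univ_sum_of_nonneg hpos (s := R))
      split_ifs with h
      · exact le_rfl
      · exact sub_nonpos.2 (hpa _ _ (Fin.le_def.2 (not_lt.1 h)))
    rw [← sum_filter, sum_sub_distrib, sum_sub_distrib, sum_const, sum_const, hB, sum_filter,
      nsmul_eq_mul, nsmul_eq_mul] at h1
    have h2 : (#R : ℝ) * t ≤ i * t :=
      mul_le_mul_of_nonneg_right (by exact_mod_cast hR) (hp0 _)
    unfold prefSum
    linarith

lemma sum_entries_le {n : ℕ} {p q : Fin n → ℝ} (hp : IsProbVec p) (hq : IsProbVec q)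
    {N : Fin n → Fin n → ℝ} (hN : IsCoupling N p q) (A : Finset (Fin n × Fin n)) (i : ℕ)
    (hA : #A ≤ i) : ∑ x ∈ A, N x.1 x.2 ≤ min (prefSum p i) (prefSum q i) := by
  obtain ⟨hN0, hNp, hNq⟩ := hN
  refine le_min ?_ ?_
  · refine le_trans ?_ (sum_le_prefSum hp (A.image Prod.fst) i (card_image_le.trans hA))
    calc ∑ x ∈ A, N x.1 x.2 ≤ ∑ x ∈ A.image Prod.fst ×ˢ univ, N x.1 x.2 :=
          sum_le_sum_of_subset_of_nonneg
            (fun x hx => mem_product.2 ⟨mem_image_of_mem _ hx, mem_univ _⟩)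
            (fun _ _ _ => hN0 _ _)
      _ = ∑ k ∈ A.image Prod.fst, p k := by
          rw [sum_product]
          exact sum_congr rfl fun k _ => hNp k
  · refine le_trans ?_ (sum_le_prefSum hq (A.image Prod.snd) i (card_image_le.trans hA))
    calc ∑ x ∈ A, N x.1 x.2 ≤ ∑ x ∈ univ ×ˢ A.image Prod.snd, N x.1 x.2 :=
          sum_le_sum_of_subset_of_nonneg
            (fun x hx => mem_product.2 ⟨mem_univ _, mem_image_of_mem _ hx⟩)
            (fun _ _ _ => hN0 _ _)
      _ = ∑ k ∈ A.image Prod.snd, q k := by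
          rw [sum_product_right]
          exact sum_congr rfl fun k _ => hNq k

/-- An enumeration of the finite set `s` along which `f` is non-increasing. -/
lemma exists_sorted_enum {α : Type*} (f : α → ℝ) (s : Finset α) :
    ∃ e : Fin #s → α, Function.Injective e ∧ (∀ i, e i ∈ s) ∧
      (∀ i j, i ≤ j → f (e j) ≤ f (e i)) ∧ ∀ F : α → ℝ, ∑ i, F (e i) = ∑ x ∈ s, F x := by
  let g : Fin #s ≃ s := s.equivFin.symm
  let σ := Tuple.sort (fun i => -f (g i))
  have hσ : Monotone ((fun i => -f (g i)) ∘ σ) := Tuple.monotone_sort _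
  refine ⟨fun i => g (σ i), ?_, fun i => (g (σ i)).2, fun i j hij => ?_, fun F => ?_⟩
  · intro i j hij
    exact σ.injective (g.injective (Subtype.ext hij))
  · have := hσ hij
    simp only [Function.comp] at this
    linarith
  · exact (Equiv.sum_comp (σ.trans g) (fun x : s => F x)).trans (sum_coe_sort s F)

lemma glb_entropy_le {n : ℕ} {p q : Fin n → ℝ} (hp : IsProbVec p) (hq : IsProbVec q)
    {N : Fin n → Fin n → ℝ} (hN : IsCoupling N p q) : H2 (glbVec p q) ≤ H2mat N := by
  -- Only the positive entries of `N` are enumerated, so that their logarithms are meaningful.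
  set s : Finset (Fin n × Fin n) := {x : Fin n × Fin n | 0 < N x.1 x.2} with hs
  obtain ⟨e, hinj, hmem, hanti, hsum⟩ := exists_sorted_enum (fun x : Fin n × Fin n => N x.1 x.2) s
  set v : ℕ → ℝ := ext0 (fun i => N (e i).1 (e i).2) with hv
  have hsupp : ∀ F : ℝ → ℝ, F 0 = 0 → ∑ k ∈ range #s, F (v k) = ∑ i, ∑ j, F (N i j) := by
    intro F hF
    rw [← Fin.sum_univ_eq_sum_range (fun k => F (v k))]
    simp only [hv, ext0_fin]
    rw [hsum (fun x => F (N x.1 x.2)), ← sum_product' univ univ (fun i j => F (N i j)), hs,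
      sum_filter]
    refine sum_congr (by simp) fun x _ => ?_
    split_ifs with h
    · rfl
    · rw [le_antisymm (not_lt.1 h) (hN.1 _ _), hF]
  have htot : ∑ k ∈ range #s, v k = 1 := by
    rw [hsupp (fun x => x) rfl, ← hp.2.2]
    exact sum_congr rfl fun i _ => hN.2.1 i
  have hpre : ∀ i ≤ #s, ∑ k ∈ range i, v k ≤ ∑ k ∈ range i, glbSeq p q k := by
    intro i hi
    have h1 : ∑ k ∈ range i, v k = ∑ j : Fin i, N (e (Fin.castLE hi j)).1
        (e (Fin.castLE hi j)).2 := by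
      rw [← Fin.sum_univ_eq_sum_range]
      exact sum_congr rfl fun j _ => ext0_fin _ (Fin.castLE hi j)
    have hinj' : Function.Injective fun j : Fin i => e (Fin.castLE hi j) :=
      hinj.comp (Fin.castLE_injective hi)
    rw [sum_glbSeq, h1, ← sum_image (s := univ) (g := fun j : Fin i => e (Fin.castLE hi j))
      (f := fun x => N x.1 x.2) hinj'.injOn]
    exact sum_entries_le hp hq hN _ i (card_image_le.trans (by simp))
  have hz : ∀ k, 0 ≤ glbSeq p q k := fun k =>
    sub_nonneg.2 (min_le_min (prefSum_mono hp.2.1 k.le_succ) (prefSum_mono hq.2.1 k.le_succ))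
  have hone : ∀ m, n ≤ m → ∑ k ∈ range m, glbSeq p q k = 1 := fun m hm => by
    rw [sum_glbSeq, prefSum_of_le p hm, prefSum_of_le q hm, hp.2.2, hq.2.2, min_self]
  -- By domination, the first `#s` terms of `p ∧ q` already have sum at least `1`.
  have hle1 : ∑ k ∈ range #s, glbSeq p q k = 1 := by
    refine le_antisymm ?_ (htot ▸ hpre _ le_rfl)
    rw [← hone (max n #s) (le_max_left _ _)]
    exact sum_le_sum_of_subset_of_nonneg (range_mono (le_max_right _ _)) fun k _ _ => hz k
  have hzero : ∀ m, ∑ k ∈ range m, glbSeq p q k = 1 → ∀ k, m ≤ k → glbSeq p q k = 0 := by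
    intro m hm k hk
    have h1 : ∑ i ∈ range (k + 1), glbSeq p q i ≤ 1 := by
      rw [← hone (max n (k + 1)) (le_max_left _ _)]
      exact sum_le_sum_of_subset_of_nonneg (range_mono (le_max_right _ _)) fun k _ _ => hz k
    have h2 : ∑ i ∈ range m, glbSeq p q i ≤ ∑ i ∈ range k, glbSeq p q i :=
      sum_le_sum_of_subset_of_nonneg (range_mono hk) fun k _ _ => hz k
    rw [sum_range_succ] at h1
    linarith [hz k]
  have hext : ∀ m, ∑ k ∈ range m, glbSeq p q k = 1 → m ≤ max n #s →
      ∑ k ∈ range m, negMulLog (glbSeq p q k) =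
        ∑ k ∈ range (max n #s), negMulLog (glbSeq p q k) := by
    intro m hm hle
    refine sum_subset (range_mono hle) fun k _ hk => ?_
    rw [hzero m hm k (by simpa using hk), Real.negMulLog_zero]
  have hmain := sum_negMulLog_le_of_prefix_le (glbSeq p q) v #s hz
    (fun k hk => by
      rw [hv, ext0, dif_pos hk]
      exact (mem_filter.1 (hmem ⟨k, hk⟩)).2)
    (fun k hk => by
      rw [hv, ext0, ext0, dif_pos hk, dif_pos (by omega)]
      exact hanti ⟨k, by omega⟩ ⟨k + 1, hk⟩ (Fin.le_def.2 k.le_succ))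
    hpre (htot.trans hle1.symm)
  rw [hext _ hle1 (le_max_right _ _), ← hext n (hone n le_rfl) (le_max_left _ _),
    hsupp _ Real.negMulLog_zero] at hmain
  rw [H2_eq, H2mat_eq]
  exact div_le_div_of_nonneg_right hmain (Real.log_pos one_lt_two).le

/-- for any `p, q ∈ P_n` there is a coupling `M ∈ C(p,q)` with
`H(M) ≤ H(p ∧ q) + 1`; consequently `H(M) ≤ min_{N ∈ C(p,q)} H(N) + 1`. -/
theorem exists_coupling_entropy_le_glb_add_one {n : ℕ} (p q : Fin n → ℝ)
    (hp : IsProbVec p) (hq : IsProbVec q) :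
    ∃ M : Fin n → Fin n → ℝ, IsCoupling M p q ∧
      H2mat M ≤ H2 (glbVec p q) + 1 ∧
      ∀ N : Fin n → Fin n → ℝ, IsCoupling N p q → H2mat M ≤ H2mat N + 1 := by
  obtain ⟨M, hM, hent⟩ := exists_coupling_entropy_le p q hp hq
  exact ⟨M, hM, hent, fun N hN => by linarith [glb_entropy_le hp hq hN]⟩
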